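/- For online bin stretching with m = 4 bins, every behavioral randomized online algorithm A satisfies sup over all instances I of E(I,A) ≥ 11/9; in other words, no randomized online algorithm has stretching factor strictly less than 11/9. -/

import Mathlib

/-!
For `t ≤ m / 2` consider `m + t` items of size `1/3`, followed by `t` items of size `1` and `m - 2t`
items of size `2/3`. The loads are multiples of `1/3` with average `1`, so the payoff is at least
`1`, and at least `4/3` unless every bin is exactly full. A full bin consists either of a single
item of size `1` or of items of size `1/3` and `2/3`, at least one of them of size `1/3`. Hence the
bins can only all be full if exactly `t` of them are empty after the first `m + t` items.

While packing items of size `1/3` the algorithm does not know `t`, so these events for different `t`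
can be compared on one long run of items of size `1/3`. As the run goes on, the number of empty bins
never increases whereas the required number `t` does, so the events are mutually exclusive and their
probabilities `p t` satisfy `∑ t, p t ≤ 1`. The expected payoff on the `t`-th instance is at least
`4/3 - p t / 3`, so the average over the `⌊m / 2⌋ + 1` instances is at least
`4/3 - 1 / (3 (⌊m / 2⌋ + 1))`, which is `11/9` for `m = 4`.
-/

open scoped BigOperators

namespace BinStretch

def Fits (m : ℕ) (I : List ℝ) : Prop :=
  ∃ σ : Fin I.length → Fin m,
    ∀ b : Fin m, ∑ i ∈ Finset.univ.filter fun i => σ i = b, I.get i ≤ 1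

def IsInstance (m : ℕ) (I : List ℝ) : Prop :=
  (∀ a ∈ I, 0 < a ∧ a ≤ 1) ∧ Fits m I

noncomputable def payoff (m : ℕ) (I : List ℝ) (D : Fin I.length → Fin m) : ℝ :=
  ⨆ b : Fin m, ∑ i ∈ Finset.univ.filter fun i => D i = b, I.get i

noncomputable def prob {m : ℕ} (A : List ℝ → PMF (Fin m)) (I : List ℝ)
    (D : Fin I.length → Fin m) : ℝ :=
  ∏ i : Fin I.length, ((A (I.take (i.1 + 1))) (D i)).toReal

noncomputable def expPayoff (m : ℕ) (A : List ℝ → PMF (Fin m)) (I : List ℝ) : ℝ :=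
  ∑ D : Fin I.length → Fin m, prob A I D * payoff m I D

def detRun {m : ℕ} (A : List ℝ → Fin m) (I : List ℝ) : Fin I.length → Fin m :=
  fun i => A (I.take (i.1 + 1))

end BinStretch

namespace BinStretch

open Finset

section ProductWeights

variable {ι κ α R : Type*} [Fintype ι] [Fintype κ] [DecidableEq κ] [Fintype α] [CommSemiring R]

lemma sum_prod_filter_comp_eq [DecidableEq α] {e : ι → κ} (he : Function.Injective e)
    (w : κ → α → R) (hw : ∀ j ∉ Set.range e, ∑ b, w j b = 1) (D' : ι → α) :
    ∑ D : κ → α with D ∘ e = D', ∏ j, w j (D j) = ∏ i, w (e i) (D' i) := by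
  let t (j : κ) : Finset α := {b | ∀ i, e i = j → b = D' i}
  have fiber_eq : ({D | D ∘ e = D'} : Finset (κ → α)) = Fintype.piFinset t := by
    ext D
    simpa [t, funext_iff] using ⟨fun h j i hij => hij ▸ h i, fun h i => h (e i) i rfl⟩
  rw [fiber_eq, ← prod_univ_sum]
  refine (Fintype.prod_of_injective e he _ _ (fun j hj => ?_) fun i => ?_).symm
  · have : t j = univ := by
      ext b
      simpa [t] using fun i hi => absurd ⟨i, hi⟩ hj
    rw [this, hw j hj]
  · have : t (e i) = {D' i} := by
      ext b
      simp [t, he.eq_iff]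
    rw [this, sum_singleton]

lemma sum_prod_filter_comp [DecidableEq ι] {e : ι → κ} (he : Function.Injective e) (w : κ → α → R)
    (hw : ∀ j ∉ Set.range e, ∑ b, w j b = 1) (p : (ι → α) → Prop) [DecidablePred p] :
    ∑ D : κ → α with p (D ∘ e), ∏ j, w j (D j) = ∑ D : ι → α with p D, ∏ i, w (e i) (D i) := by
  classical
  rw [← sum_fiberwise_of_maps_to (g := (· ∘ e)) (t := {D' | p D'}) (by simp)]
  refine sum_congr rfl fun D' hD' => ?_
  rw [← sum_prod_filter_comp_eq he w hw D', filter_filter]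
  congr! 2 with D
  simp only [mem_filter_univ] at hD'
  exact and_iff_right_of_imp fun h => h ▸ hD'

end ProductWeights

lemma sum_pmf_toReal_eq_one {α : Type*} [Fintype α] (p : PMF α) : ∑ a, (p a).toReal = 1 := by
  rw [← ENNReal.toReal_sum fun a _ => p.apply_ne_top a, ← tsum_fintype (L := .unconditional α),
    p.tsum_coe, ENNReal.toReal_one]

variable {m : ℕ}

section Probability

variable (A : List ℝ → PMF (Fin m))

lemma prob_nonneg (I : List ℝ) (D : Fin I.length → Fin m) : 0 ≤ prob A I D :=
  prod_nonneg fun _ _ => ENNReal.toReal_nonneg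

lemma sum_prob (I : List ℝ) : ∑ D, prob A I D = 1 := by
  simp only [prob, ← Fintype.prod_sum fun (i : Fin I.length) b => (A (I.take (i.1 + 1)) b).toReal,
    sum_pmf_toReal_eq_one, prod_const_one]

lemma sum_filter_prob_of_prefix {P I : List ℝ} (h : P <+: I)
    (p : (Fin P.length → Fin m) → Prop) [DecidablePred p] :
    ∑ D with p (D ∘ Fin.castLE h.length_le), prob A I D = ∑ D with p D, prob A P D := by
  refine (sum_prod_filter_comp (Fin.castLE_injective h.length_le)
    (fun i b => (A (I.take (i.1 + 1)) b).toReal) (fun _ _ => sum_pmf_toReal_eq_one _) p).trans ?_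
  have take_eq (i : Fin P.length) : I.take (i.1 + 1) = P.take (i.1 + 1) := by
    obtain ⟨T, rfl⟩ := h
    exact List.take_append_of_le_length i.2
  simp only [prob, Fin.val_castLE, take_eq]

lemma sub_mul_sum_prob_le_expPayoff (I : List ℝ) (c δ : ℝ) (p : (Fin I.length → Fin m) → Prop)
    [DecidablePred p] (hp : ∀ D, p D → c - δ ≤ payoff m I D)
    (hnp : ∀ D, ¬ p D → c ≤ payoff m I D) :
    c - δ * ∑ D with p D, prob A I D ≤ expPayoff m A I := by
  calc c - δ * ∑ D with p D, prob A I D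
      = ∑ D, prob A I D * (c - if p D then δ else 0) := by
        simp only [mul_sub, sum_sub_distrib, ← sum_mul, sum_prob, one_mul, mul_ite, mul_zero,
          ← sum_filter, mul_comm δ]
    _ ≤ expPayoff m A I := by
        refine sum_le_sum fun D _ => mul_le_mul_of_nonneg_left ?_ (prob_nonneg A I D)
        split_ifs with h
        · exact hp D h
        · simpa using hnp D h

end Probability

section Contents

/-- The multiset of sizes of the items of `I` that the decisions `D` put into bin `b`; its sum is
the load of `b`. -/
def contents (I : List ℝ) (D : Fin I.length → Fin m) (b : Fin m) : Multiset ℝ :=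
  ∑ i with D i = b, {I.get i}

variable {I : List ℝ} (D : Fin I.length → Fin m)

lemma mem_contents {a : ℝ} {b : Fin m} : a ∈ contents I D b ↔ ∃ i, D i = b ∧ I.get i = a := by
  simp [contents, Multiset.mem_sum, eq_comm]

lemma sum_contents_eq_load (b : Fin m) :
    (contents I D b).sum = ∑ i with D i = b, I.get i := by
  simp only [contents, Multiset.sum_sum, Multiset.sum_singleton]

lemma sum_contents : ∑ b, contents I D b = (I : Multiset ℝ) := by
  simp only [contents, sum_fiberwise]
  calc ∑ i, {I.get i} = univ.val.map I.get := by
        rw [← Multiset.sum_map_singleton (univ.val.map I.get), Multiset.map_map]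
        rfl
    _ = I := by rw [Fin.univ_val_map, List.ofFn_get]

lemma contents_cons (a : ℝ) (b₀ b : Fin m) :
    contents (a :: I) (Fin.cons b₀ D) b =
      (Pi.single b₀ {a} : Fin m → Multiset ℝ) b + contents I D b := by
  simp only [contents, sum_filter, List.length_cons, Fin.sum_univ_succ]
  simp [Pi.single_apply, eq_comm]

lemma exists_contents_eq (f : Fin m → Multiset ℝ) (hf : ∑ b, f b = (I : Multiset ℝ)) :
    ∃ D, contents I D = f := by
  induction I generalizing f with
  | nil =>
    refine ⟨Fin.elim0, funext fun b => ?_⟩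
    simp_all [contents]
  | cons a I ih =>
    obtain ⟨b₀, -, hb₀⟩ := Multiset.mem_sum.1 (hf ▸ List.mem_cons_self : a ∈ ∑ b, f b)
    obtain ⟨s, hs⟩ := Multiset.exists_cons_of_mem hb₀
    have f_eq : f = Pi.single b₀ {a} + Function.update f b₀ s := by
      ext1 b
      rcases eq_or_ne b b₀ with rfl | hb
      · simp [hs]
      · simp [hb]
    obtain ⟨D, hD⟩ := ih (Function.update f b₀ s) <| by
      rw [f_eq] at hf
      simpa [sum_add_distrib, ← Multiset.cons_coe] using hf
    refine ⟨Fin.cons b₀ D, funext fun b => ?_⟩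
    rw [contents_cons, hD, ← Pi.add_apply, ← f_eq]

end Contents

section Payoff

variable {I : List ℝ}

lemma sum_sum_contents (D : Fin I.length → Fin m) : ∑ b, (contents I D b).sum = I.sum := by
  rw [← Multiset.sum_sum, sum_contents, Multiset.sum_coe]

lemma contents_le (D : Fin I.length → Fin m) (b : Fin m) : contents I D b ≤ (I : Multiset ℝ) :=
  sum_contents D ▸ single_le_sum_of_canonicallyOrdered (mem_univ b)

lemma sum_contents_le_payoff (D : Fin I.length → Fin m) (b : Fin m) :
    (contents I D b).sum ≤ payoff m I D := by
  rw [sum_contents_eq_load]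
  exact le_ciSup (f := fun b => ∑ i with D i = b, I.get i) (Set.finite_range _).bddAbove b

lemma sum_le_mul_payoff (D : Fin I.length → Fin m) : I.sum ≤ m * payoff m I D := by
  calc I.sum = ∑ b, (contents I D b).sum := (sum_sum_contents D).symm
    _ ≤ ∑ _b : Fin m, payoff m I D := sum_le_sum fun b _ => sum_contents_le_payoff D b
    _ = m * payoff m I D := by simp

lemma fits_iff_exists_contents : Fits m I ↔ ∃ D, ∀ b : Fin m, (contents I D b).sum ≤ 1 := by
  simp only [Fits, sum_contents_eq_load]

lemma Fits.sum_le (hI : Fits m I) : I.sum ≤ m := by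
  obtain ⟨D, hD⟩ := fits_iff_exists_contents.1 hI
  calc I.sum = ∑ b, (contents I D b).sum := (sum_sum_contents D).symm
    _ ≤ ∑ _b : Fin m, 1 := sum_le_sum fun b _ => hD b
    _ = m := by simp

lemma payoff_le_sum (hI : ∀ a ∈ I, 0 ≤ a) (D : Fin I.length → Fin m) : payoff m I D ≤ I.sum := by
  refine Real.iSup_le (fun b => ?_) (List.sum_nonneg hI)
  rw [← sum_sum_contents D, ← sum_contents_eq_load]
  refine single_le_sum (fun b _ => Multiset.sum_nonneg fun a ha => ?_) (mem_univ b)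
  exact hI a (Multiset.mem_of_le (contents_le D b) ha)

lemma IsInstance.expPayoff_le (A : List ℝ → PMF (Fin m)) (hI : IsInstance m I) :
    expPayoff m A I ≤ m := by
  calc expPayoff m A I ≤ ∑ D, prob A I D * m :=
        sum_le_sum fun D _ => mul_le_mul_of_nonneg_left
          ((payoff_le_sum (fun a ha => (hI.1 a ha).1.le) D).trans hI.2.sum_le) (prob_nonneg A I D)
    _ = m := by rw [← sum_mul, sum_prob, one_mul]

lemma bddAbove_range_expPayoff (A : List ℝ → PMF (Fin m)) :
    BddAbove (Set.range fun I : {I : List ℝ // IsInstance m I} => expPayoff m A I.1) :=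
  ⟨m, Set.forall_mem_range.2 fun I => I.2.expPayoff_le A⟩

end Payoff

section EmptyBins

/-- The bins that receive none of the first `k` items under the decisions `D`. -/
def emptyAfter {n : ℕ} (D : Fin n → Fin m) (k : ℕ) : Finset (Fin m) :=
  {b | ∀ i, i.1 < k → D i ≠ b}

lemma emptyAfter_antitone {n : ℕ} (D : Fin n → Fin m) : Antitone (emptyAfter D) := by
  intro k l hkl b
  simp only [emptyAfter, mem_filter_univ]
  exact fun h i hi => h i (hi.trans_le hkl)

lemma emptyAfter_comp_castLE {n l k : ℕ} (D : Fin n → Fin m) (hl : l ≤ n) (hk : k ≤ l) :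
    emptyAfter (D ∘ Fin.castLE hl) k = emptyAfter D k := by
  ext b
  simp only [emptyAfter, mem_filter_univ]
  exact ⟨fun h i hi => h ⟨i, hi.trans_le hk⟩ hi, fun h i hi => h (Fin.castLE hl i) hi⟩

variable (A : List ℝ → PMF (Fin m))

/-- The probability that exactly `t` bins are still empty when the algorithm `A` has packed the
first `k` items of `I`. -/
noncomputable def probEmptyAfter (I : List ℝ) (k t : ℕ) : ℝ :=
  ∑ D : Fin I.length → Fin m with #(emptyAfter D k) = t, prob A I D

lemma probEmptyAfter_of_prefix {P I : List ℝ} (h : P <+: I) {k : ℕ} (hk : k ≤ P.length) (t : ℕ) :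
    probEmptyAfter A I k t = probEmptyAfter A P k t := by
  simp only [probEmptyAfter, ← sum_filter_prob_of_prefix A h, emptyAfter_comp_castLE _ _ hk]

lemma sum_probEmptyAfter_le_one (I : List ℝ) {k : ℕ → ℕ} (hk : Monotone k) (s : Finset ℕ) :
    ∑ t ∈ s, probEmptyAfter A I (k t) t ≤ 1 := by
  have at_most_one {D : Fin I.length → Fin m} {t u : ℕ} (ht : #(emptyAfter D (k t)) = t)
      (hu : #(emptyAfter D (k u)) = u) : u ≤ t := by
    by_contra! htu
    have := card_le_card (emptyAfter_antitone D (hk htu.le))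
    lia
  have disjoint_events : (s : Set ℕ).PairwiseDisjoint
      fun t => ({D | #(emptyAfter D (k t)) = t} : Finset (Fin I.length → Fin m)) :=
    fun t _ u _ htu => disjoint_filter.2 fun D _ ht hu =>
      htu ((at_most_one hu ht).antisymm (at_most_one ht hu))
  simp only [probEmptyAfter, ← sum_biUnion disjoint_events]
  exact (sum_le_univ_sum_of_nonneg (prob_nonneg A I)).trans_eq (sum_prob A I)

end EmptyBins

section HardInstance

/-- `m + t` items of size `1/3`, then `t` of size `1` and `m - 2t` of size `2/3`. It is meant for
`2t ≤ m`, so that the subtraction is exact and the total volume is `m`. -/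
noncomputable def hardInstance (m t : ℕ) : List ℝ :=
  List.replicate (m + t) (1 / 3) ++ (List.replicate t 1 ++ List.replicate (m - 2 * t) (2 / 3))

variable {t : ℕ}

lemma mem_hardInstance {a : ℝ} (ha : a ∈ hardInstance m t) : a = 1 / 3 ∨ a = 2 / 3 ∨ a = 1 := by
  simp only [hardInstance, List.mem_append, List.mem_replicate] at ha
  tauto

lemma sum_hardInstance (ht : 2 * t ≤ m) : (hardInstance m t).sum = m := by
  simp only [hardInstance, List.sum_append, List.sum_replicate, nsmul_eq_mul, Nat.cast_add,
    Nat.cast_sub ht, Nat.cast_mul, Nat.cast_ofNat]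
  ring

lemma count_one_hardInstance : (hardInstance m t).count 1 = t := by
  norm_num [hardInstance, List.count_replicate]

lemma get_hardInstance_eq_third_iff (i : Fin (hardInstance m t).length) :
    (hardInstance m t).get i = 1 / 3 ↔ i.1 < m + t := by
  rw [List.get_eq_getElem]
  simp only [hardInstance, List.getElem_append, List.length_replicate, List.getElem_replicate]
  split_ifs <;> norm_num [*]

lemma isInstance_hardInstance (ht : 2 * t ≤ m) : IsInstance m (hardInstance m t) := by
  refine ⟨fun a ha => by rcases mem_hardInstance ha with rfl | rfl | rfl <;> norm_num, ?_⟩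
  obtain ⟨p, rfl⟩ : ∃ p, m = p + t + t := ⟨m - 2 * t, by lia⟩
  let packing : Fin (p + t + t) → Multiset ℝ :=
    Fin.append (Fin.append (fun _ => {1 / 3, 2 / 3}) fun _ => Multiset.replicate 3 (1 / 3))
      fun _ => {1}
  have sum_packing : ∑ b, packing b = (hardInstance (p + t + t) t : Multiset ℝ) := by
    have hp : p + t + t - 2 * t = p := by lia
    simp only [packing, hardInstance, Fin.sum_univ_add, Fin.append_left, Fin.append_right,
      sum_const, card_univ, Fintype.card_fin, ← Multiset.coe_add, Multiset.coe_replicate, hp,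
      ← Multiset.nsmul_singleton, Multiset.insert_eq_cons, ← Multiset.singleton_add]
    module
  obtain ⟨D, hD⟩ := exists_contents_eq packing sum_packing
  refine fits_iff_exists_contents.2 ⟨D, fun b => hD ▸ ?_⟩
  induction b using Fin.addCases with
  | left b => induction b using Fin.addCases <;> norm_num [packing]
  | right b => simp [packing]

lemma sum_eq_count_div_three {s : Multiset ℝ} (hs : ∀ a ∈ s, a = 1 / 3 ∨ a = 2 / 3 ∨ a = 1) :
    s.sum = (s.count (1 / 3) + 2 * s.count (2 / 3) + 3 * s.count 1 : ℕ) / 3 := by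
  have hsub : s.toFinset ⊆ {1 / 3, 2 / 3, 1} := fun a ha => by
    simpa using hs a (Multiset.mem_toFinset.1 ha)
  rw [sum_multiset_count_of_subset s _ hsub, sum_insert (by norm_num), sum_insert (by norm_num),
    sum_singleton]
  push_cast
  ring

lemma sum_le_one_of_sum_lt_four_thirds {s : Multiset ℝ}
    (hs : ∀ a ∈ s, a = 1 / 3 ∨ a = 2 / 3 ∨ a = 1) (hlt : s.sum < 4 / 3) : s.sum ≤ 1 := by
  rw [sum_eq_count_div_three hs] at hlt ⊢
  rw [div_lt_div_iff_of_pos_right three_pos] at hlt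
  rw [div_le_one three_pos]
  norm_cast at hlt ⊢
  lia

lemma count_one_eq_ite {s : Multiset ℝ} (hs : ∀ a ∈ s, a = 1 / 3 ∨ a = 2 / 3 ∨ a = 1)
    (hsum : s.sum = 1) : s.count 1 = if 1 / 3 ∈ s then 0 else 1 := by
  rw [sum_eq_count_div_three hs, div_eq_one_iff_eq three_ne_zero] at hsum
  norm_cast at hsum
  simp only [← Multiset.count_pos]
  split_ifs <;> lia

lemma card_emptyAfter_of_payoff_lt (ht : 2 * t ≤ m) {D : Fin (hardInstance m t).length → Fin m}
    (hD : payoff m (hardInstance m t) D < 4 / 3) : #(emptyAfter D (m + t)) = t := by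
  let c := contents (hardInstance m t) D
  have sizes b : ∀ a ∈ c b, a = 1 / 3 ∨ a = 2 / 3 ∨ a = 1 := fun a ha =>
    mem_hardInstance (Multiset.mem_of_le (contents_le D b) ha)
  have load_le_one b : (c b).sum ≤ 1 :=
    sum_le_one_of_sum_lt_four_thirds (sizes b) ((sum_contents_le_payoff D b).trans_lt hD)
  have load_eq_one b : (c b).sum = 1 := by
    refine (sum_eq_sum_iff_of_le fun b _ => load_le_one b).1 ?_ b (mem_univ b)
    rw [sum_sum_contents, sum_hardInstance ht]
    simp
  have mem_emptyAfter_iff b : b ∈ emptyAfter D (m + t) ↔ 1 / 3 ∉ c b := by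
    simp only [emptyAfter, mem_filter_univ, c, mem_contents, get_hardInstance_eq_third_iff]
    grind
  calc #(emptyAfter D (m + t))
      = ∑ b, (c b).count 1 := by
        simp only [count_one_eq_ite (sizes _) (load_eq_one _), ← ite_not (_ ∈ c _),
          ← mem_emptyAfter_iff]
        simp
    _ = t := by rw [← Multiset.count_sum', sum_contents, Multiset.coe_count, count_one_hardInstance]

lemma one_le_payoff_hardInstance (hm : m ≠ 0) (ht : 2 * t ≤ m)
    (D : Fin (hardInstance m t).length → Fin m) : 1 ≤ payoff m (hardInstance m t) D := by
  have := sum_le_mul_payoff D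
  rw [sum_hardInstance ht] at this
  exact le_of_mul_le_mul_left (by simpa using this) (by positivity : (0 : ℝ) < m)

lemma sub_probEmptyAfter_le_expPayoff (A : List ℝ → PMF (Fin m)) (ht : 2 * t ≤ m) :
    4 / 3 - 1 / 3 * probEmptyAfter A (hardInstance m t) (m + t) t ≤
      expPayoff m A (hardInstance m t) := by
  have hm : m ≠ 0 := by
    obtain ⟨b, -⟩ := (A []).support_nonempty
    exact b.pos.ne'
  refine sub_mul_sum_prob_le_expPayoff A _ _ _ _ (fun D _ => ?_) fun D hD => ?_
  · norm_num [one_le_payoff_hardInstance hm ht D]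
  · exact not_lt.1 (mt (card_emptyAfter_of_payoff_lt ht) hD)

lemma sum_probEmptyAfter_hardInstance_le_one (A : List ℝ → PMF (Fin m)) (n : ℕ) :
    ∑ t ∈ range n, probEmptyAfter A (hardInstance m t) (m + t) t ≤ 1 := by
  let thirds (k : ℕ) : List ℝ := List.replicate k (1 / 3)
  have eq_thirds : ∀ t ∈ range n, probEmptyAfter A (hardInstance m t) (m + t) t =
      probEmptyAfter A (thirds (m + n)) (m + t) t := fun t ht => by
    have prefix_thirds : thirds (m + t) <+: thirds (m + n) :=
      ⟨thirds (n - t), by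
        rw [List.replicate_append_replicate, add_assoc, Nat.add_sub_of_le (mem_range.1 ht).le]⟩
    have prefix_hardInstance : thirds (m + t) <+: hardInstance m t := List.prefix_append _ _
    rw [probEmptyAfter_of_prefix A prefix_hardInstance (by simp [thirds]),
      probEmptyAfter_of_prefix A prefix_thirds (by simp [thirds])]
  rw [sum_congr rfl eq_thirds]
  exact sum_probEmptyAfter_le_one A _ (fun _ _ h => by simpa using h) _

end HardInstance

end BinStretch

theorem randomized_lower_bound_four_bins_general {m : ℕ} (A : List ℝ → PMF (Fin m)) :
    (4 : ℝ) / 3 - 1 / (3 * ((m / 2 : ℕ) + 1)) ≤ ⨆ I : {I : List ℝ // BinStretch.IsInstance m I},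
      BinStretch.expPayoff m A I.1 := by
  set S := ⨆ I : {I : List ℝ // BinStretch.IsInstance m I}, BinStretch.expPayoff m A I.1
  let p (t : ℕ) : ℝ := BinStretch.probEmptyAfter A (BinStretch.hardInstance m t) (m + t) t
  have bound_each : ∀ t ∈ Finset.range (m / 2 + 1), 4 / 3 - 1 / 3 * p t ≤ S := fun t ht => by
    have ht' : 2 * t ≤ m := by
      have := Finset.mem_range.1 ht
      lia
    exact (BinStretch.sub_probEmptyAfter_le_expPayoff A ht').trans <| le_ciSup
      (BinStretch.bddAbove_range_expPayoff A) ⟨_, BinStretch.isInstance_hardInstance ht'⟩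
  have sum_p_le : ∑ t ∈ Finset.range (m / 2 + 1), p t ≤ 1 :=
    BinStretch.sum_probEmptyAfter_hardInstance_le_one A _
  have average := Finset.sum_le_card_nsmul _ _ _ bound_each
  rw [Finset.sum_sub_distrib, ← Finset.mul_sum, Finset.sum_const, Finset.card_range,
    nsmul_eq_mul, nsmul_eq_mul] at average
  have hn : (0 : ℝ) < (m / 2 + 1 : ℕ) := by positivity
  have mul_eq : ((m / 2 + 1 : ℕ) : ℝ) * (1 / (3 * (m / 2 + 1 : ℕ))) = 1 / 3 := by field_simp
  refine le_of_mul_le_mul_left ?_ hn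
  rw [← Nat.cast_succ, mul_sub]
  linarith

theorem randomized_lower_bound_four_bins (A : List ℝ → PMF (Fin 4)) :
    (11 : ℝ) / 9 ≤ ⨆ I : {I : List ℝ // BinStretch.IsInstance 4 I},
      BinStretch.expPayoff 4 A I.1 := by
  convert randomized_lower_bound_four_bins_general A using 1
  norm_num
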